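/- The function Q(t) = (e^{-αt} - e^{-βt})/(1 - e^{-t}) for t ≠ 0, with Q(0) = β - α, is increasing on (-∞, 0) if and only if (β - α)(1 - α - β) ≥ 0 and (β - α)(2 - |α - β| - α - β) ≥ 0. -/

import Mathlib

/-!
With `p = 1 - α - β` and `d = β - α`, factoring an exponential out of the numerator and out of the
denominator gives `Q t = exp (p * (t / 2)) * (sinh (d * (t / 2)) / sinh (t / 2))`. The quotient of
hyperbolic sines has the sign of `d`, so logarithmic differentiation shows that `Q` is monotone on
the negative axis iff `0 ≤ d * (p - φ x)` for all `x > 0`, where `φ x = d * coth (d * x) - coth x`.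
By Cauchy's mean value theorem every value of `φ` lies between `0` and `|d| - 1`, and these two
numbers are the limits of `φ` at `0` and at `∞`. A weak inequality affine in `φ x` therefore
holds for all `x > 0` iff it holds with `φ x` replaced by each of them.
-/

open Real Set Filter Topology

theorem monotoneOn_iff_forall_hasDerivAt_nonneg {f f' : ℝ → ℝ} {s : Set ℝ} (hs : IsOpen s)
    (hconv : Convex ℝ s) (hf : ∀ x ∈ s, HasDerivAt f (f' x) x) :
    MonotoneOn f s ↔ ∀ x ∈ s, 0 ≤ f' x := by
  constructor
  · intro hmono x hx
    rw [← (hf x hx).deriv, ← derivWithin_of_isOpen hs hx]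
    exact hmono.derivWithin_nonneg
  · intro hnonneg
    exact monotoneOn_of_hasDerivWithinAt_nonneg hconv (HasDerivAt.continuousOn hf)
      (fun x hx => (hf x (interior_subset hx)).hasDerivWithinAt)
      (fun x hx => hnonneg x (interior_subset hx))

theorem monotoneOn_comp_div_Iio_zero_iff {𝕜 γ : Type*} [Field 𝕜] [LinearOrder 𝕜]
    [IsStrictOrderedRing 𝕜] [Preorder γ] {f : 𝕜 → γ} {c : 𝕜} (hc : 0 < c) :
    MonotoneOn (fun t => f (t / c)) (Iio 0) ↔ MonotoneOn f (Iio 0) := by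
  constructor
  · intro h
    have hcomp : MonotoneOn (fun x => f (c * x / c)) (Iio 0) :=
      h.comp (fun x _ y _ hxy => mul_le_mul_of_nonneg_left hxy hc.le)
        (fun x hx => mul_neg_of_pos_of_neg hc hx)
    simpa only [mul_div_cancel_left₀ _ hc.ne'] using hcomp
  · intro h
    exact h.comp (fun x _ y _ hxy => div_le_div_of_nonneg_right hxy hc.le)
      (fun x hx => div_neg_of_neg_of_pos hx hc)

theorem mul_nonneg_iff_of_mul_pos {R : Type*} [Ring R] [LinearOrder R] [IsStrictOrderedRing R]
    {a b c : R} (hab : 0 < a * b) : 0 ≤ a * c ↔ 0 ≤ b * c := by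
  rcases pos_and_pos_or_neg_and_neg_of_mul_pos hab with ⟨ha, hb⟩ | ⟨ha, hb⟩
  · rw [mul_nonneg_iff_of_pos_left ha, mul_nonneg_iff_of_pos_left hb]
  · rw [← neg_mul_neg a, ← neg_mul_neg b, mul_nonneg_iff_of_pos_left (neg_pos.2 ha),
      mul_nonneg_iff_of_pos_left (neg_pos.2 hb)]

theorem exp_sub_exp (a b : ℝ) :
    exp a - exp b = 2 * exp ((a + b) / 2) * sinh ((a - b) / 2) := by
  have ha : exp a = exp ((a + b) / 2) * exp ((a - b) / 2) := by rw [← exp_add]; ring_nf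
  have hb : exp b = exp ((a + b) / 2) * exp (-((a - b) / 2)) := by rw [← exp_add]; ring_nf
  rw [ha, hb, sinh_eq]
  ring

theorem exp_sub_exp_div_one_sub_exp (α β t : ℝ) :
    (exp (-α * t) - exp (-β * t)) / (1 - exp (-t)) =
      exp ((1 - α - β) * (t / 2)) * (sinh ((β - α) * (t / 2)) / sinh (t / 2)) := by
  have hnum : exp (-α * t) - exp (-β * t) =
      2 * exp (-(t / 2)) * (exp ((1 - α - β) * (t / 2)) * sinh ((β - α) * (t / 2))) := by
    rw [exp_sub_exp, ← mul_assoc, mul_assoc 2 (exp _) (exp _), ← exp_add]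
    ring_nf
  have hden : 1 - exp (-t) = 2 * exp (-(t / 2)) * sinh (t / 2) := by
    rw [← exp_zero, exp_sub_exp]
    ring_nf
  rw [hnum, hden, mul_div_mul_left _ _ (by positivity), mul_div_assoc]

theorem self_mul_sinh_pos {x : ℝ} (hx : x ≠ 0) : 0 < x * sinh x := by
  rcases hx.lt_or_gt with h | h
  · exact mul_pos_of_neg_of_neg h (sinh_neg_iff.2 h)
  · exact mul_pos h (sinh_pos_iff.2 h)

theorem mul_sinh_mul_div_sinh_pos {d x : ℝ} (hd : d ≠ 0) (hx : x ≠ 0) :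
    0 < d * (sinh (d * x) / sinh x) := by
  have hsinh : sinh x ≠ 0 := sinh_ne_zero.2 hx
  have hquot : d * (sinh (d * x) / sinh x) = d * x * sinh (d * x) / (x * sinh x) := by
    field_simp
  rw [hquot]
  exact div_pos (self_mul_sinh_pos (mul_ne_zero hd hx)) (self_mul_sinh_pos hx)

/-- The hyperbolic cotangent, i.e. the logarithmic derivative of `sinh`; its junk value at the pole
is `coth 0 = 0`. -/
noncomputable def coth (x : ℝ) : ℝ := cosh x / sinh x

theorem coth_neg (x : ℝ) : coth (-x) = -coth x := by
  rw [coth, coth, cosh_neg, sinh_neg, div_neg]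

theorem one_lt_coth {x : ℝ} (hx : 0 < x) : 1 < coth x :=
  (one_lt_div (sinh_pos_iff.2 hx)).2 (sinh_lt_cosh x)

theorem abs_mul_coth_abs_mul (d x : ℝ) : |d| * coth (|d| * x) = d * coth (d * x) := by
  rcases abs_choice d with h | h <;> rw [h]
  rw [neg_mul d x, coth_neg, neg_mul_neg]

theorem abs_lt_mul_coth_mul {d x : ℝ} (hd : d ≠ 0) (hx : 0 < x) : |d| < d * coth (d * x) := by
  rw [← abs_mul_coth_abs_mul]
  exact lt_mul_of_one_lt_right (abs_pos.2 hd) (one_lt_coth (mul_pos (abs_pos.2 hd) hx))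

theorem tendsto_coth_atTop : Tendsto coth atTop (𝓝 1) := by
  have hexp : Tendsto (fun x : ℝ => exp (-(2 * x))) atTop (𝓝 0) :=
    tendsto_exp_neg_atTop_nhds_zero.comp (tendsto_id.const_mul_atTop two_pos)
  have hlim : Tendsto (fun x : ℝ => (1 + exp (-(2 * x))) / (1 - exp (-(2 * x)))) atTop (𝓝 1) := by
    simpa using! (hexp.const_add 1).div (hexp.const_sub 1) (by norm_num)
  refine hlim.congr fun x => ?_
  have hsq : exp (-(2 * x)) = exp (-x) * exp (-x) := by rw [← exp_add]; ring_nf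
  have hone : (1 : ℝ) = exp x * exp (-x) := by rw [← exp_add, add_neg_cancel, exp_zero]
  rw [coth, cosh_eq, sinh_eq, div_div_div_cancel_right₀ two_ne_zero, hsq, hone, ← add_mul,
    ← sub_mul, mul_div_mul_right _ _ (exp_ne_zero _)]

/-- The logarithmic derivative of `x ↦ sinh (d * x) / sinh x`, which governs the monotonicity of
that quotient and of its multiples by exponentials. -/
noncomputable def cothDiff (d x : ℝ) : ℝ := d * coth (d * x) - coth x

theorem cothDiff_neg (d x : ℝ) : cothDiff d (-x) = -cothDiff d x := by
  rw [cothDiff, cothDiff, mul_neg, coth_neg, coth_neg]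
  ring

section

variable {d x : ℝ}

theorem hasDerivAt_exp_mul_sinh_div_sinh (p : ℝ) (hd : d ≠ 0) (hx : x ≠ 0) :
    HasDerivAt (fun y => exp (p * y) * (sinh (d * y) / sinh y))
      (exp (p * x) * (sinh (d * x) / sinh x) * (p + cothDiff d x)) x := by
  have hsinh : sinh x ≠ 0 := sinh_ne_zero.2 hx
  have h := ((hasDerivAt_id x).const_mul p).exp.mul
    (((hasDerivAt_id x).const_mul d).sinh.div (hasDerivAt_sinh x) hsinh)
  refine h.congr_deriv ?_
  simp only [cothDiff, coth, id_eq, Pi.div_apply]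
  field_simp

theorem exists_cothDiff_mul_eq (hd : d ≠ 0) (hx : 0 < x) :
    ∃ y ∈ Ioo 0 x, cothDiff d x * (d * coth (d * y) + coth y) = d ^ 2 - 1 := by
  have hsinh_mul (y : ℝ) : HasDerivAt (fun y => sinh (d * y)) (d * cosh (d * y)) y := by
    simpa [mul_comm] using ((hasDerivAt_id y).const_mul d).sinh
  have hcosh_mul (y : ℝ) : HasDerivAt (fun y => cosh (d * y)) (d * sinh (d * y)) y := by
    simpa [mul_comm] using ((hasDerivAt_id y).const_mul d).cosh
  -- `cothDiff d` is the quotient of the next two functions, and both vanish at `0`.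
  have hnum (y : ℝ) :
      HasDerivAt (fun y => d * (cosh (d * y) * sinh y) - sinh (d * y) * cosh y)
        ((d ^ 2 - 1) * (sinh (d * y) * sinh y)) y :=
    ((((hcosh_mul y).mul (hasDerivAt_sinh y)).const_mul d).sub
      ((hsinh_mul y).mul (hasDerivAt_cosh y))).congr_deriv (by ring)
  have hden (y : ℝ) : HasDerivAt (fun y => sinh (d * y) * sinh y)
      (d * cosh (d * y) * sinh y + sinh (d * y) * cosh y) y :=
    (hsinh_mul y).mul (hasDerivAt_sinh y)
  obtain ⟨y, hy, hratio⟩ := exists_ratio_hasDerivAt_eq_ratio_slope _ _ hx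
    (HasDerivAt.continuousOn fun y _ => hnum y) (fun y _ => hnum y) _ _
    (HasDerivAt.continuousOn fun y _ => hden y) (fun y _ => hden y)
  have hy_ne : y ≠ 0 := hy.1.ne'
  refine ⟨y, hy, ?_⟩
  simp only [mul_zero, sinh_zero, zero_mul, sub_zero] at hratio
  simp only [cothDiff, coth]
  field_simp
  linear_combination -hratio

theorem exists_cothDiff_eq_mul (hd : d ≠ 0) (hx : 0 < x) :
    ∃ θ ∈ Icc (0 : ℝ) 1, cothDiff d x = θ * (|d| - 1) := by
  obtain ⟨y, ⟨hy, -⟩, hxy⟩ := exists_cothDiff_mul_eq hd hx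
  have hden : |d| + 1 < d * coth (d * y) + coth y :=
    add_lt_add (abs_lt_mul_coth_mul hd hy) (one_lt_coth hy)
  have hden_pos : 0 < d * coth (d * y) + coth y := lt_trans (by positivity) hden
  refine ⟨(|d| + 1) / (d * coth (d * y) + coth y),
    ⟨by positivity, (div_le_one hden_pos).2 hden.le⟩, ?_⟩
  rw [div_mul_eq_mul_div, eq_div_iff hden_pos.ne', hxy, ← sq_abs]
  ring

theorem abs_cothDiff_le (hd : d ≠ 0) (hx : 0 < x) : |cothDiff d x| ≤ |d ^ 2 - 1| * sinh x := by
  obtain ⟨y, ⟨hy, hyx⟩, hxy⟩ := exists_cothDiff_mul_eq hd hx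
  have hsinh : 0 < sinh y := sinh_pos_iff.2 hy
  have hcoth : 0 < coth y := one_pos.trans (one_lt_coth hy)
  have hmul_coth : 0 < d * coth (d * y) := (abs_pos.2 hd).trans (abs_lt_mul_coth_mul hd hy)
  have hone : 1 ≤ (d * coth (d * y) + coth y) * sinh x :=
    calc 1 ≤ cosh y := one_le_cosh y
      _ = coth y * sinh y := (div_mul_cancel₀ _ hsinh.ne').symm
      _ ≤ (d * coth (d * y) + coth y) * sinh x := by
        gcongr
        · linarith
        · exact sinh_le_sinh.2 hyx.le
  calc |cothDiff d x| ≤ |cothDiff d x| * ((d * coth (d * y) + coth y) * sinh x) :=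
        le_mul_of_one_le_right (abs_nonneg _) hone
    _ = |d ^ 2 - 1| * sinh x := by
        rw [← hxy, abs_mul, abs_of_pos (add_pos hmul_coth hcoth), mul_assoc]

theorem tendsto_cothDiff_nhdsGT_zero (hd : d ≠ 0) : Tendsto (cothDiff d) (𝓝[>] 0) (𝓝 0) := by
  have hbound : Tendsto (fun x => |d ^ 2 - 1| * sinh x) (𝓝[>] 0) (𝓝 0) := by
    have h : Continuous fun x => |d ^ 2 - 1| * sinh x := by fun_prop
    simpa using (h.tendsto 0).mono_left nhdsWithin_le_nhds
  refine squeeze_zero_norm' ?_ hbound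
  filter_upwards [self_mem_nhdsWithin] with x hx
  exact abs_cothDiff_le hd hx

theorem tendsto_cothDiff_atTop (hd : d ≠ 0) : Tendsto (cothDiff d) atTop (𝓝 (|d| - 1)) := by
  have hmul : Tendsto (fun x => |d| * coth (|d| * x)) atTop (𝓝 (|d| * 1)) :=
    (tendsto_coth_atTop.comp (tendsto_id.const_mul_atTop (abs_pos.2 hd))).const_mul |d|
  simpa only [abs_mul_coth_abs_mul, mul_one] using! hmul.sub tendsto_coth_atTop

theorem forall_mul_sub_cothDiff_nonneg_iff (hd : d ≠ 0) (c p : ℝ) :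
    (∀ x > 0, 0 ≤ c * (p - cothDiff d x)) ↔ 0 ≤ c * p ∧ 0 ≤ c * (p - (|d| - 1)) := by
  constructor
  · intro h
    constructor
    · have hlim := ((tendsto_cothDiff_nhdsGT_zero hd).const_sub p).const_mul c
      rw [sub_zero] at hlim
      exact ge_of_tendsto hlim (eventually_mem_nhdsWithin.mono h)
    · exact ge_of_tendsto (((tendsto_cothDiff_atTop hd).const_sub p).const_mul c)
        ((eventually_gt_atTop 0).mono h)
  · rintro ⟨hzero, htop⟩ x hx
    obtain ⟨θ, ⟨hθ₀, hθ₁⟩, hθ⟩ := exists_cothDiff_eq_mul hd hx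
    calc 0 ≤ (1 - θ) * (c * p) + θ * (c * (p - (|d| - 1))) :=
          add_nonneg (mul_nonneg (sub_nonneg.2 hθ₁) hzero) (mul_nonneg hθ₀ htop)
      _ = c * (p - cothDiff d x) := by rw [hθ]; ring

theorem monotoneOn_exp_mul_sinh_div_sinh_iff (hd : d ≠ 0) (p : ℝ) :
    MonotoneOn (fun x => exp (p * x) * (sinh (d * x) / sinh x)) (Iio 0) ↔
      0 ≤ d * p ∧ 0 ≤ d * (p - (|d| - 1)) := by
  have hsign (x : ℝ) (hx : x ∈ Iio 0) :
      0 ≤ exp (p * x) * (sinh (d * x) / sinh x) * (p + cothDiff d x) ↔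
        0 ≤ d * (p + cothDiff d x) := by
    refine mul_nonneg_iff_of_mul_pos ?_
    rw [mul_assoc, mul_comm (sinh (d * x) / sinh x)]
    exact mul_pos (exp_pos _) (mul_sinh_mul_div_sinh_pos hd (mem_Iio.1 hx).ne)
  rw [monotoneOn_iff_forall_hasDerivAt_nonneg isOpen_Iio (convex_Iio 0)
      fun x hx => hasDerivAt_exp_mul_sinh_div_sinh p hd hx.ne,
    ← forall_mul_sub_cothDiff_nonneg_iff hd d p]
  refine (forall₂_congr hsign).trans ?_
  rw [neg_surjective.forall]
  simp only [mem_Iio, neg_lt_zero, gt_iff_lt, cothDiff_neg, ← sub_eq_add_neg]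

end

theorem stmt2 (α β : ℝ) (hab : α ≠ β) (h01 : (α, β) ≠ (0, 1)) (h10 : (α, β) ≠ (1, 0)) :
    MonotoneOn (fun t : ℝ => if t = 0 then β - α else (Real.exp (-α*t) - Real.exp (-β*t)) / (1 - Real.exp (-t))) (Set.Iio 0) ↔
      (β - α) * (1 - α - β) ≥ 0 ∧ (β - α) * (2 - |α - β| - α - β) ≥ 0 := by
  have hQ : EqOn (fun t : ℝ => if t = 0 then β - α else
        (exp (-α * t) - exp (-β * t)) / (1 - exp (-t)))
      (fun t => exp ((1 - α - β) * (t / 2)) * (sinh ((β - α) * (t / 2)) / sinh (t / 2)))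
      (Iio 0) := fun t ht => by
    simp only [if_neg (mem_Iio.1 ht).ne, exp_sub_exp_div_one_sub_exp]
  have hconst : 1 - α - β - (|β - α| - 1) = 2 - |α - β| - α - β := by
    rw [abs_sub_comm]
    ring
  rw [hQ.congr_monotoneOn, monotoneOn_comp_div_Iio_zero_iff
      (f := fun x => exp ((1 - α - β) * x) * (sinh ((β - α) * x) / sinh x)) two_pos,
    monotoneOn_exp_mul_sinh_div_sinh_iff (sub_ne_zero.2 hab.symm), hconst]
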